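/- The K-algebra 𝔗(v) = T(v)/(a^p, b^p) has dimension np^2 as a K-vector space. -/

import Mathlib

/-!
The algebra `𝔗(v)` is graded by weight, with `a` of weight `1`, `b` of weight `-1` and `h` of weight
`0`. Put `G_w = a^w` for `w ≥ 0` and `G_w = b^{-w}` for `w < 0`; then the weight-`w` part is
`G_w K[h]`, it vanishes for `|w| ≥ p`, and for `|w| < p` it is isomorphic to `K[X]/(q_w)`, where
`q_w` is a product of `p - |w|` shifts of `v`. Hence the dimension is
`∑_{|w| < p} n (p - |w|) = n p²`.

The linear map `phi : (m_w)_w ↦ ∑_{|w| < p} G_w m_w(h)` from families `ℤ → K[X]` to `𝔗(v)` is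
surjective (`phi_surjective`), because `a`, `b` and `h` map each subspace `G_w K[h]` into
another one. Its kernel is the space `N` of families with `q_w ∣ m_w` for all `w`
(`ker_phi`):

* `N` is killed, since `q_w(h)` equals `a^{p-w} b^{p-w}` for `w ≥ 0` and `b^{p+w} a^{p+w}` for
  `w ≤ 0`, so that `G_w q_w(h)` has the factor `a^p` or `b^p` (`G_mul_q`). Characteristic `p` enters
  through `v(X + p) = v(X)`.
* Conversely, writing down left multiplication in terms of the `G_w` gives operators on families
  that preserve `N` and satisfy the defining relations modulo `N`, hence a representation `rep` of
  `𝔗(v)` on the quotient `V` by `N`. Applying `phi m` to the class of `1` in weight `0` returns the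
  class of `m` (`rep_phi`).

The same `N` is the kernel of the surjection `theta` onto `∏_{|w| < p} K[X]/(q_w)`, whose dimension
is computed in `rank_target`.
-/

/-!
The algebra `𝔗(v) = T(v)/(a^p, b^p)`, where `T(v)` is Hodges' algebra: the quotient of the
free algebra `K⟨a,b,h⟩` by the two-sided ideal generated by `ha − ah − a`, `hb − bh + b`,
`ba − v(h)`, `ab − v(h−1)`.  We realise `𝔗(v)` as a `RingQuot` of the free algebra on three
generators (`0 ↦ a`, `1 ↦ b`, `2 ↦ h`), imposing in addition the relations `a^p = 0`,
`b^p = 0`.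
-/

open Polynomial

noncomputable section

/-- the generator `a` of the free algebra `K⟨a,b,h⟩` -/
def fa (K : Type) [Field K] : FreeAlgebra K (Fin 3) := FreeAlgebra.ι K 0

/-- the generator `b` of the free algebra `K⟨a,b,h⟩` -/
def fb (K : Type) [Field K] : FreeAlgebra K (Fin 3) := FreeAlgebra.ι K 1

/-- the generator `h` of the free algebra `K⟨a,b,h⟩` -/
def fh (K : Type) [Field K] : FreeAlgebra K (Fin 3) := FreeAlgebra.ι K 2

/-- The defining relations of `𝔗(v) = T(v)/(a^p, b^p)`. -/
inductive TTvRel (K : Type) [Field K] (v : K[X]) (p : ℕ) :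
    FreeAlgebra K (Fin 3) → FreeAlgebra K (Fin 3) → Prop
  | ha : TTvRel K v p (fh K * fa K) (fa K * (fh K + 1))
  | hb : TTvRel K v p (fh K * fb K) (fb K * (fh K - 1))
  | ba : TTvRel K v p (fb K * fa K) (aeval (fh K) v)
  | ab : TTvRel K v p (fa K * fb K) (aeval (fh K - 1) v)
  | ap : TTvRel K v p (fa K ^ p) 0
  | bp : TTvRel K v p (fb K ^ p) 0

/-- the algebra `𝔗(v) = T(v)/(a^p, b^p)` -/
abbrev TTv (K : Type) [Field K] (v : K[X]) (p : ℕ) := RingQuot (TTvRel K v p)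

/-- the image of `a` in `𝔗(v)` -/
def TTa (K : Type) [Field K] (v : K[X]) (p : ℕ) : TTv K v p :=
  RingQuot.mkAlgHom K (TTvRel K v p) (fa K)

/-- the image of `b` in `𝔗(v)` -/
def TTb (K : Type) [Field K] (v : K[X]) (p : ℕ) : TTv K v p :=
  RingQuot.mkAlgHom K (TTvRel K v p) (fb K)

/-- the image of `h` in `𝔗(v)` -/
def TTh (K : Type) [Field K] (v : K[X]) (p : ℕ) : TTv K v p :=
  RingQuot.mkAlgHom K (TTvRel K v p) (fh K)

namespace TTvDim

variable {K : Type} [Field K]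

/-! ### Shifted polynomials and their products -/

/-- The shifted polynomial `v(X + j)`, for an integer `j`. -/
def sh (v : K[X]) (j : ℤ) : K[X] := v.comp (X + C (j : K))

/-- The polynomial `q_w` that cuts out the weight-`w` component of `𝔗(v)`, which is
`K[X]/(q_w)`. It is `v(X + w) ⋯ v(X + p - 1)` for `0 ≤ w`, `v(X) ⋯ v(X + p + w - 1)` for `w ≤ 0`,
and `1` once `p ≤ |w|`. -/
def q (v : K[X]) (p : ℕ) (w : ℤ) : K[X] :=
  ∏ k ∈ Finset.Ico (max 0 w) (min (p : ℤ) (p + w)), sh v k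

/-- The coefficient of `a` from weight `w` to weight `w + 1`: with `G_w = a^w` or `b^{-w}`,
`a G_w = G_{w+1} al_w(h)`. -/
def al (v : K[X]) (w : ℤ) : K[X] := if 0 ≤ w then 1 else sh v w

/-- The coefficient of `b` from weight `w + 1` to weight `w`: with `G_w = a^w` or `b^{-w}`,
`b G_{w+1} = G_w be_w(h)`. -/
def be (v : K[X]) (w : ℤ) : K[X] := if 0 ≤ w then sh v w else 1

lemma sh_monic {v : K[X]} (hv : v.Monic) (j : ℤ) : (sh v j).Monic :=
  hv.comp_X_add_C _

lemma sh_natDegree (v : K[X]) (j : ℤ) : (sh v j).natDegree = v.natDegree := by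
  rw [sh, natDegree_comp, natDegree_X_add_C, mul_one]

lemma sh_add_p (v : K[X]) (p : ℕ) [CharP K p] (j : ℤ) : sh v (j + p) = sh v j := by
  simp [sh]

lemma sh_p_add (v : K[X]) (p : ℕ) [CharP K p] (j : ℤ) : sh v (p + j) = sh v j := by
  simp [sh]

lemma q_monic {v : K[X]} (hv : v.Monic) (p : ℕ) (w : ℤ) : (q v p w).Monic :=
  monic_prod_of_monic _ _ fun _ _ => sh_monic hv _

lemma q_natDegree {v : K[X]} (hv : v.Monic) (p : ℕ) (w : ℤ) :
    (q v p w).natDegree = (p - w.natAbs) * v.natDegree := by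
  rw [q, natDegree_prod_of_monic _ _ fun _ _ => sh_monic hv _]
  simp only [sh_natDegree, Finset.sum_const, Int.card_Ico, smul_eq_mul]
  congr 1
  omega

lemma q_eq_one (v : K[X]) (p : ℕ) {w : ℤ} (hw : w ∉ Finset.Ioo (-(p : ℤ)) p) :
    q v p w = 1 := by
  rw [q, Finset.Ico_eq_empty, Finset.prod_empty]
  simp only [Finset.mem_Ioo] at hw
  omega

/-- This is what makes `a` act on `∏_w K[X]/(q_w)`. For `w ≤ 0` it uses `v(X + p) = v(X)`. -/
lemma q_dvd_al_mul (v : K[X]) (p : ℕ) [CharP K p] (w : ℤ) :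
    q v p w ∣ al v (w - 1) * q v p (w - 1) := by
  unfold al q
  split_ifs with h
  · rw [one_mul]
    refine Finset.prod_dvd_prod_of_subset _ _ _ fun k hk => ?_
    simp only [Finset.mem_Ico] at hk ⊢
    omega
  · by_cases h2 : 0 ≤ p + (w - 1)
    · rw [← sh_p_add v p, ← Finset.prod_insert (by simp)]
      refine Finset.prod_dvd_prod_of_subset _ _ _ fun k hk => ?_
      simp only [Finset.mem_Ico, Finset.mem_insert] at hk ⊢
      omega
    · rw [Finset.Ico_eq_empty (by omega), Finset.prod_empty]
      exact one_dvd _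

/-- This is what makes `b` act on `∏_w K[X]/(q_w)`. -/
lemma q_dvd_be_mul (v : K[X]) (p : ℕ) (w : ℤ) :
    q v p w ∣ be v w * q v p (w + 1) := by
  unfold be q
  split_ifs with h
  · rw [← Finset.prod_insert (by simp)]
    refine Finset.prod_dvd_prod_of_subset _ _ _ fun k hk => ?_
    simp only [Finset.mem_Ico, Finset.mem_insert] at hk ⊢
    omega
  · rw [one_mul]
    refine Finset.prod_dvd_prod_of_subset _ _ _ fun k hk => ?_
    simp only [Finset.mem_Ico] at hk ⊢
    omega

/-! ### The representation -/

/-- The action of `a` on weight-indexed families of polynomials. -/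
def opA (v : K[X]) : (ℤ → K[X]) →ₗ[K] (ℤ → K[X]) where
  toFun m w := al v (w - 1) * m (w - 1)
  map_add' m m' := by ext1 w; simp [mul_add]
  map_smul' c m := by ext1 w; simp

/-- The action of `b` on weight-indexed families of polynomials. -/
def opB (v : K[X]) : (ℤ → K[X]) →ₗ[K] (ℤ → K[X]) where
  toFun m w := be v w * m (w + 1)
  map_add' m m' := by ext1 w; simp [mul_add]
  map_smul' c m := by ext1 w; simp

/-- The action of `h` on weight-indexed families of polynomials. -/
def opH : (ℤ → K[X]) →ₗ[K] (ℤ → K[X]) where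
  toFun m w := (X + C (w : K)) * m w
  map_add' m m' := by ext1 w; simp [mul_add]
  map_smul' c m := by ext1 w; simp

/-- The families whose weight-`w` entry is divisible by `q_w`. -/
def N (v : K[X]) (p : ℕ) : Submodule K (ℤ → K[X]) where
  carrier := {m | ∀ w, q v p w ∣ m w}
  add_mem' h h' w := dvd_add (h w) (h' w)
  zero_mem' _ := dvd_zero _
  smul_mem' c m h w := by
    rw [Pi.smul_apply, smul_eq_C_mul]
    exact (h w).mul_left _

lemma mem_N {v : K[X]} {p : ℕ} {m : ℤ → K[X]} : m ∈ N v p ↔ ∀ w, q v p w ∣ m w := Iff.rfl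

lemma opA_N (v : K[X]) (p : ℕ) [CharP K p] : N v p ≤ (N v p).comap (opA v) :=
  fun _ hm w => (q_dvd_al_mul v p w).trans (mul_dvd_mul_left _ (hm (w - 1)))

lemma opB_N (v : K[X]) (p : ℕ) : N v p ≤ (N v p).comap (opB v) :=
  fun _ hm w => (q_dvd_be_mul v p w).trans (mul_dvd_mul_left _ (hm (w + 1)))

lemma opH_N (v : K[X]) (p : ℕ) : N v p ≤ (N v p).comap opH :=
  fun _ hm w => (hm w).mul_left _

/-- The space `∏_w K[X]/(q_w)` on which `𝔗(v)` acts, as a quotient of the space of all families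
`ℤ → K[X]`; only the weights with `|w| < p` contribute. -/
abbrev V (v : K[X]) (p : ℕ) := (ℤ → K[X]) ⧸ N v p

/-- The action of `a` on `V`. -/
def bA (v : K[X]) (p : ℕ) [CharP K p] : Module.End K (V v p) :=
  (N v p).mapQ (N v p) (opA v) (opA_N v p)

/-- The action of `b` on `V`. -/
def bB (v : K[X]) (p : ℕ) : Module.End K (V v p) :=
  (N v p).mapQ (N v p) (opB v) (opB_N v p)

/-- The action of `h` on `V`. -/
def bH (v : K[X]) (p : ℕ) : Module.End K (V v p) :=
  (N v p).mapQ (N v p) opH (opH_N v p)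

lemma bA_mk (v : K[X]) (p : ℕ) [CharP K p] (m : ℤ → K[X]) :
    bA v p ((N v p).mkQ m) = (N v p).mkQ (opA v m) := rfl

lemma bB_mk (v : K[X]) (p : ℕ) (m : ℤ → K[X]) :
    bB v p ((N v p).mkQ m) = (N v p).mkQ (opB v m) := rfl

lemma bH_mk (v : K[X]) (p : ℕ) (m : ℤ → K[X]) :
    bH v p ((N v p).mkQ m) = (N v p).mkQ (opH m) := rfl

/-- If `L` acts on `V` as multiplication by `g w` in each weight `w`, then `f(L)` acts as
multiplication by `f(g w)`. -/
lemma aeval_mk (v : K[X]) (p : ℕ) (L : Module.End K (V v p)) (g : ℤ → K[X])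
    (hL : ∀ m, L ((N v p).mkQ m) = (N v p).mkQ (g * m)) (f : K[X]) (m : ℤ → K[X]) :
    aeval L f ((N v p).mkQ m) = (N v p).mkQ (fun w => f.comp (g w) * m w) := by
  have hpow : ∀ (k : ℕ) (m : ℤ → K[X]),
      (L ^ k) ((N v p).mkQ m) = (N v p).mkQ (g ^ k * m) := by
    intro k
    induction k with
    | zero => intro m; simp
    | succ k ih => intro m; rw [pow_succ, Module.End.mul_apply, hL, ih, pow_succ, mul_assoc]
  induction f using Polynomial.induction_on' with
  | add f f' hf hf' =>
    rw [map_add, LinearMap.add_apply, hf, hf', ← map_add]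
    congr 1
    ext1 w
    simp [add_mul]
  | monomial k c =>
    rw [aeval_monomial, Module.End.mul_apply, hpow, Module.algebraMap_end_apply, ← map_smul]
    congr 1
    ext1 w
    simp [smul_eq_C_mul, mul_assoc]

lemma aeval_bH_mk (v : K[X]) (p : ℕ) (f : K[X]) (m : ℤ → K[X]) :
    aeval (bH v p) f ((N v p).mkQ m) = (N v p).mkQ (fun w => sh f w * m w) :=
  aeval_mk v p _ (fun w => X + C (w : K)) (fun _ => rfl) f m

lemma aeval_bH_sub_mk (v : K[X]) (p : ℕ) (f : K[X]) (m : ℤ → K[X]) :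
    aeval (bH v p - 1) f ((N v p).mkQ m) = (N v p).mkQ (fun w => sh f (w - 1) * m w) := by
  refine aeval_mk v p _ (fun w => X + C ((w - 1 : ℤ) : K)) (fun m => ?_) f m
  rw [LinearMap.sub_apply, bH_mk, Module.End.one_apply, ← map_sub]
  congr 1
  ext1 w
  simp only [opH, LinearMap.coe_mk, AddHom.coe_mk, Pi.sub_apply, Pi.mul_apply]
  push_cast
  rw [C_sub, C_1]
  ring

/-- The `k` coefficients that `a^k` picks up on the way from weight `w - k` to weight `w` are
`v(X + j)` for the negative weights `j` met, and `1` for the others. -/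
lemma dvd_opA_pow (v : K[X]) (k : ℕ) : ∀ (m : ℤ → K[X]) (w : ℤ),
    (∏ j ∈ Finset.Ico (w - k) (min 0 w), sh v j) ∣ (opA v ^ k) m w := by
  induction k with
  | zero => intro m w; rw [Finset.Ico_eq_empty (by simp)]; simp
  | succ k ih =>
    intro m w
    rw [pow_succ', Module.End.mul_apply]
    refine dvd_trans ?_ (mul_dvd_mul_left (al v (w - 1)) (ih m (w - 1)))
    unfold al
    split_ifs with h
    · rw [one_mul]
      refine Finset.prod_dvd_prod_of_subset _ _ _ fun k hk => ?_
      simp only [Finset.mem_Ico] at hk ⊢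
      omega
    · rw [← Finset.prod_insert (by simp)]
      refine Finset.prod_dvd_prod_of_subset _ _ _ fun k hk => ?_
      simp only [Finset.mem_Ico, Finset.mem_insert] at hk ⊢
      omega

/-- The `k` coefficients that `b^k` picks up on the way from weight `w + k` down to weight `w` are
`v(X + j)` for the `j ≥ 0` met, and `1` for the others. -/
lemma dvd_opB_pow (v : K[X]) (k : ℕ) : ∀ (m : ℤ → K[X]) (w : ℤ),
    (∏ j ∈ Finset.Ico (max 0 w) (w + k), sh v j) ∣ (opB v ^ k) m w := by
  induction k with
  | zero => intro m w; rw [Finset.Ico_eq_empty (by simp)]; simp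
  | succ k ih =>
    intro m w
    rw [pow_succ', Module.End.mul_apply]
    refine dvd_trans ?_ (mul_dvd_mul_left (be v w) (ih m (w + 1)))
    unfold be
    split_ifs with h
    · rw [← Finset.prod_insert (by simp)]
      refine Finset.prod_dvd_prod_of_subset _ _ _ fun k hk => ?_
      simp only [Finset.mem_Ico, Finset.mem_insert] at hk ⊢
      omega
    · rw [one_mul]
      refine Finset.prod_dvd_prod_of_subset _ _ _ fun k hk => ?_
      simp only [Finset.mem_Ico] at hk ⊢
      omega

lemma prod_sh_shift (v : K[X]) (p : ℕ) [CharP K p] (x y : ℤ) :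
    ∏ j ∈ Finset.Ico x y, sh v j = ∏ j ∈ Finset.Ico (x + p) (y + p), sh v j := by
  rw [← Finset.map_add_right_Ico, Finset.prod_map]
  simp [sh_add_p]

lemma bA_pow (v : K[X]) (p : ℕ) [CharP K p] : bA v p ^ p = 0 := by
  have hmk : ∀ (k : ℕ) (m : ℤ → K[X]),
      (bA v p ^ k) ((N v p).mkQ m) = (N v p).mkQ ((opA v ^ k) m) := by
    intro k
    induction k with
    | zero => intro m; rfl
    | succ k ih => intro m; rw [pow_succ, Module.End.mul_apply, bA_mk, ih]; rfl
  refine LinearMap.ext fun x => ?_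
  obtain ⟨m, rfl⟩ := (N v p).mkQ_surjective x
  rw [hmk, LinearMap.zero_apply, Submodule.mkQ_apply, Submodule.Quotient.mk_eq_zero]
  intro w
  refine dvd_trans ?_ (dvd_opA_pow v p m w)
  rw [prod_sh_shift v p]
  refine Finset.prod_dvd_prod_of_subset _ _ _ fun k hk => ?_
  simp only [Finset.mem_Ico] at hk ⊢
  omega

lemma bB_pow (v : K[X]) (p : ℕ) : bB v p ^ p = 0 := by
  have hmk : ∀ (k : ℕ) (m : ℤ → K[X]),
      (bB v p ^ k) ((N v p).mkQ m) = (N v p).mkQ ((opB v ^ k) m) := by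
    intro k
    induction k with
    | zero => intro m; rfl
    | succ k ih => intro m; rw [pow_succ, Module.End.mul_apply, bB_mk, ih]; rfl
  refine LinearMap.ext fun x => ?_
  obtain ⟨m, rfl⟩ := (N v p).mkQ_surjective x
  rw [hmk, LinearMap.zero_apply, Submodule.mkQ_apply, Submodule.Quotient.mk_eq_zero]
  intro w
  refine dvd_trans ?_ (dvd_opB_pow v p m w)
  refine Finset.prod_dvd_prod_of_subset _ _ _ fun k hk => ?_
  simp only [Finset.mem_Ico] at hk ⊢
  omega

/-- The action of the free algebra on `V`. -/
def repF (v : K[X]) (p : ℕ) [CharP K p] : FreeAlgebra K (Fin 3) →ₐ[K] Module.End K (V v p) :=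
  FreeAlgebra.lift K ![bA v p, bB v p, bH v p]

lemma repF_a (v : K[X]) (p : ℕ) [CharP K p] : repF v p (fa K) = bA v p := by
  simp [repF, fa]

lemma repF_b (v : K[X]) (p : ℕ) [CharP K p] : repF v p (fb K) = bB v p := by
  simp [repF, fb]

lemma repF_h (v : K[X]) (p : ℕ) [CharP K p] : repF v p (fh K) = bH v p := by
  simp [repF, fh]

lemma al_mul_be (v : K[X]) (w : ℤ) : al v w * be v w = sh v w := by
  unfold al be; split_ifs <;> simp

lemma repF_rel (v : K[X]) (p : ℕ) [CharP K p] ⦃x y : FreeAlgebra K (Fin 3)⦄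
    (h : TTvRel K v p x y) : repF v p x = repF v p y := by
  cases h with
  | ha =>
    refine LinearMap.ext fun x => ?_
    obtain ⟨m, rfl⟩ := (N v p).mkQ_surjective x
    simp only [map_mul, map_add, map_one, repF_a, repF_h, Module.End.mul_apply,
      LinearMap.add_apply, Module.End.one_apply, bA_mk, bH_mk]
    rw [← map_add]
    congr 1
    ext1 w
    simp [opA, opH]
    ring
  | hb =>
    refine LinearMap.ext fun x => ?_
    obtain ⟨m, rfl⟩ := (N v p).mkQ_surjective x
    simp only [map_mul, map_sub, map_one, repF_b, repF_h, Module.End.mul_apply,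
      LinearMap.sub_apply, Module.End.one_apply, bB_mk, bH_mk]
    rw [← map_sub]
    congr 1
    ext1 w
    simp [opB, opH]
    ring
  | ba =>
    refine LinearMap.ext fun x => ?_
    obtain ⟨m, rfl⟩ := (N v p).mkQ_surjective x
    rw [← aeval_algHom_apply, map_mul, repF_a, repF_b, repF_h, Module.End.mul_apply, bA_mk, bB_mk,
      aeval_bH_mk]
    congr 1
    ext1 w
    simp [opA, opB, ← al_mul_be v w]
    ring
  | ab =>
    refine LinearMap.ext fun x => ?_
    obtain ⟨m, rfl⟩ := (N v p).mkQ_surjective x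
    rw [← aeval_algHom_apply, map_mul, map_sub, map_one, repF_a, repF_b, repF_h,
      Module.End.mul_apply, bB_mk, bA_mk, aeval_bH_sub_mk]
    congr 1
    ext1 w
    simp [opA, opB, ← al_mul_be v (w - 1)]
    ring
  | ap => rw [map_pow, map_zero, repF_a, bA_pow]
  | bp => rw [map_pow, map_zero, repF_b, bB_pow]

/-- The action of `𝔗(v)` on `V`. -/
def rep (v : K[X]) (p : ℕ) [CharP K p] : TTv K v p →ₐ[K] Module.End K (V v p) :=
  RingQuot.liftAlgHom K ⟨repF v p, repF_rel v p⟩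

lemma rep_a (v : K[X]) (p : ℕ) [CharP K p] : rep v p (TTa K v p) = bA v p := by
  simp [rep, TTa, repF_a]

lemma rep_b (v : K[X]) (p : ℕ) [CharP K p] : rep v p (TTb K v p) = bB v p := by
  simp [rep, TTb, repF_b]

lemma rep_h (v : K[X]) (p : ℕ) [CharP K p] : rep v p (TTh K v p) = bH v p := by
  simp [rep, TTh, repF_h]

/-! ### Identities in `𝔗(v)` -/

section relations

variable (v : K[X]) (p : ℕ)

lemma h_mul_a : TTh K v p * TTa K v p = TTa K v p * (TTh K v p + 1) := by
  simpa [TTh, TTa] using RingQuot.mkAlgHom_rel K (TTvRel.ha (K := K) (v := v) (p := p))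

lemma h_mul_b : TTh K v p * TTb K v p = TTb K v p * (TTh K v p - 1) := by
  simpa [TTh, TTb] using RingQuot.mkAlgHom_rel K (TTvRel.hb (K := K) (v := v) (p := p))

lemma b_mul_a : TTb K v p * TTa K v p = aeval (TTh K v p) v := by
  have := RingQuot.mkAlgHom_rel K (TTvRel.ba (K := K) (v := v) (p := p))
  rwa [← aeval_algHom_apply, map_mul] at this

lemma sh_add (f : K[X]) (i j : ℤ) : sh (sh f i) j = sh f (i + j) := by
  unfold sh
  rw [comp_assoc]
  congr 1
  simp
  ring

lemma aeval_sh (x : TTv K v p) (f : K[X]) (j : ℤ) :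
    aeval x (sh f j) = aeval (x + algebraMap K _ (j : K)) f := by
  simp [sh, aeval_comp]

lemma a_mul_b : TTa K v p * TTb K v p = aeval (TTh K v p) (sh v (-1)) := by
  have := RingQuot.mkAlgHom_rel K (TTvRel.ab (K := K) (v := v) (p := p))
  rw [← aeval_algHom_apply, map_mul, map_sub, map_one] at this
  rw [aeval_sh]
  simpa [sub_eq_add_neg, TTa, TTb, TTh] using this

lemma a_pow_p : TTa K v p ^ p = 0 := by
  have := RingQuot.mkAlgHom_rel K (TTvRel.ap (K := K) (v := v) (p := p))
  rwa [map_pow, map_zero] at this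

lemma b_pow_p : TTb K v p ^ p = 0 := by
  have := RingQuot.mkAlgHom_rel K (TTvRel.bp (K := K) (v := v) (p := p))
  rwa [map_pow, map_zero] at this

/-- If `x y = y (x + j)`, then `f(x) y = y f(x + j)`. -/
lemma aeval_mul_of_semiconj {x y : TTv K v p} {j : ℤ}
    (h : x * y = y * (x + algebraMap K _ (j : K))) (f : K[X]) :
    aeval x f * y = y * aeval x (sh f j) := by
  have hs : SemiconjBy y (x + algebraMap K _ (j : K)) x := h.symm
  rw [aeval_sh]
  induction f using Polynomial.induction_on' with
  | add f f' hf hf' => rw [map_add, map_add, add_mul, mul_add, hf, hf']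
  | monomial k c =>
    rw [aeval_monomial, aeval_monomial, mul_assoc, ← (hs.pow_right k).eq, ← mul_assoc,
      Algebra.commutes, mul_assoc]

lemma aeval_mul_a (f : K[X]) :
    aeval (TTh K v p) f * TTa K v p = TTa K v p * aeval (TTh K v p) (sh f 1) :=
  aeval_mul_of_semiconj v p (by simpa using h_mul_a v p) f

lemma aeval_mul_b (f : K[X]) :
    aeval (TTh K v p) f * TTb K v p = TTb K v p * aeval (TTh K v p) (sh f (-1)) :=
  aeval_mul_of_semiconj v p (by simpa [sub_eq_add_neg] using h_mul_b v p) f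

lemma sh_zero (f : K[X]) : sh f 0 = f := by simp [sh]

lemma aeval_mul_a_pow (f : K[X]) (k : ℕ) :
    aeval (TTh K v p) f * TTa K v p ^ k = TTa K v p ^ k * aeval (TTh K v p) (sh f k) := by
  induction k with
  | zero => simp [sh_zero]
  | succ k ih =>
    rw [pow_succ, ← mul_assoc, ih, mul_assoc, aeval_mul_a, sh_add, mul_assoc]
    simp

lemma aeval_mul_b_pow (f : K[X]) (k : ℕ) :
    aeval (TTh K v p) f * TTb K v p ^ k = TTb K v p ^ k * aeval (TTh K v p) (sh f (-k)) := by
  induction k with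
  | zero => simp [sh_zero]
  | succ k ih =>
    rw [pow_succ, ← mul_assoc, ih, mul_assoc, aeval_mul_b, sh_add, mul_assoc]
    congr 4
    push_cast
    ring

lemma b_pow_mul_a_pow (k : ℕ) :
    TTb K v p ^ k * TTa K v p ^ k = aeval (TTh K v p) (∏ j ∈ Finset.Ico 0 (k : ℤ), sh v j) := by
  induction k with
  | zero => simp
  | succ k ih =>
    have hI : Finset.Ico 0 ((k + 1 : ℕ) : ℤ) = insert (k : ℤ) (Finset.Ico 0 (k : ℤ)) := by
      ext j
      simp only [Finset.mem_Ico, Finset.mem_insert]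
      omega
    rw [hI, Finset.prod_insert (by simp), mul_comm, map_mul, ← ih, mul_assoc, ← aeval_mul_a_pow,
      ← b_mul_a, pow_succ, pow_succ']
    simp only [mul_assoc]

lemma a_pow_mul_b_pow (k : ℕ) :
    TTa K v p ^ k * TTb K v p ^ k =
      aeval (TTh K v p) (∏ j ∈ Finset.Ico (-(k : ℤ)) 0, sh v j) := by
  induction k with
  | zero => simp
  | succ k ih =>
    have hI : Finset.Ico (-((k + 1 : ℕ) : ℤ)) 0 =
        insert (-1 + -(k : ℤ)) (Finset.Ico (-(k : ℤ)) 0) := by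
      ext j
      simp only [Finset.mem_Ico, Finset.mem_insert]
      omega
    rw [hI, Finset.prod_insert (by simp), mul_comm, map_mul, ← ih, mul_assoc, ← sh_add,
      ← aeval_mul_b_pow, ← a_mul_b, pow_succ, pow_succ']
    simp only [mul_assoc]

/-- The weight-`w` generator over `K[h]`: `a^w` for `w ≥ 0` and `b^{-w}` for `w < 0`. -/
def G (w : ℤ) : TTv K v p := if 0 ≤ w then TTa K v p ^ w.toNat else TTb K v p ^ (-w).toNat

lemma G_natCast (k : ℕ) : G v p k = TTa K v p ^ k := by simp [G]

lemma G_neg_natCast (k : ℕ) : G v p (-k) = TTb K v p ^ k := by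
  cases k with
  | zero => simp [G]
  | succ k => rw [G, if_neg (by omega)]; congr 1

lemma G_eq_zero {w : ℤ} (hw : w ∉ Finset.Ioo (-(p : ℤ)) p) : G v p w = 0 := by
  simp only [Finset.mem_Ioo] at hw
  obtain ⟨k, rfl | rfl⟩ := w.eq_nat_or_neg
  · rw [G_natCast]
    exact pow_eq_zero_of_le (by omega) (a_pow_p v p)
  · rw [G_neg_natCast]
    exact pow_eq_zero_of_le (by omega) (b_pow_p v p)

lemma a_mul_G (w : ℤ) : TTa K v p * G v p w = G v p (w + 1) * aeval (TTh K v p) (al v w) := by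
  unfold al
  split_ifs with h
  · obtain ⟨k, rfl⟩ := Int.eq_ofNat_of_zero_le h
    have : (k : ℤ) + 1 = (k + 1 : ℕ) := by push_cast; rfl
    rw [this, G_natCast, G_natCast, pow_succ', map_one, mul_one]
  · obtain ⟨k, rfl⟩ : ∃ k : ℕ, w = -((k + 1 : ℕ) : ℤ) := ⟨(-w - 1).toNat, by omega⟩
    have : -((k + 1 : ℕ) : ℤ) + 1 = -(k : ℤ) := by push_cast; ring
    rw [this, G_neg_natCast, G_neg_natCast, pow_succ', ← mul_assoc, a_mul_b, aeval_mul_b_pow,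
      sh_add]
    congr 4
    push_cast
    ring

lemma b_mul_G (w : ℤ) :
    TTb K v p * G v p w = G v p (w - 1) * aeval (TTh K v p) (be v (w - 1)) := by
  unfold be
  split_ifs with h
  · obtain ⟨k, rfl⟩ : ∃ k : ℕ, w = ((k + 1 : ℕ) : ℤ) := ⟨(w - 1).toNat, by omega⟩
    have : ((k + 1 : ℕ) : ℤ) - 1 = (k : ℤ) := by push_cast; ring
    rw [this, G_natCast, G_natCast, pow_succ', ← mul_assoc, b_mul_a, aeval_mul_a_pow]
  · obtain ⟨k, rfl⟩ : ∃ k : ℕ, w = -(k : ℤ) := ⟨(-w).toNat, by omega⟩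
    have : -(k : ℤ) - 1 = -((k + 1 : ℕ) : ℤ) := by push_cast; ring
    rw [this, G_neg_natCast, G_neg_natCast, pow_succ', map_one, mul_one]

lemma h_mul_G (w : ℤ) :
    TTh K v p * G v p w = G v p w * aeval (TTh K v p) (X + C (w : K)) := by
  have hX : sh (X : K[X]) w = X + C (w : K) := by simp [sh]
  rw [← hX]
  obtain ⟨k, rfl | rfl⟩ := w.eq_nat_or_neg
  · rw [G_natCast, ← aeval_mul_a_pow, aeval_X]
  · rw [G_neg_natCast, ← aeval_mul_b_pow, aeval_X]

/-- With `l = p - |w|`, one has `q_w(h) = a^l b^l` if `w ≥ 0` and `q_w(h) = b^l a^l` if `w ≤ 0`, so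
that `G_w q_w(h)` contains the factor `a^p` or `b^p`. -/
lemma G_mul_q [CharP K p] {w : ℤ} (hw : w ∈ Finset.Ioo (-(p : ℤ)) p) :
    G v p w * aeval (TTh K v p) (q v p w) = 0 := by
  simp only [Finset.mem_Ioo] at hw
  obtain ⟨k, rfl | rfl⟩ := w.eq_nat_or_neg
  · obtain ⟨l, rfl⟩ : ∃ l, p = k + l := ⟨p - k, by omega⟩
    have hq : q v (k + l) (k : ℤ) = ∏ j ∈ Finset.Ico (-(l : ℤ)) 0, sh v j := by
      rw [prod_sh_shift v (k + l), q]
      congr 2 <;> push_cast <;> omega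
    rw [hq, ← a_pow_mul_b_pow, G_natCast, ← mul_assoc, ← pow_add, a_pow_p, zero_mul]
  · obtain ⟨l, rfl⟩ : ∃ l, p = k + l := ⟨p - k, by omega⟩
    have hq : q v (k + l) (-(k : ℤ)) = ∏ j ∈ Finset.Ico 0 (l : ℤ), sh v j := by
      rw [q]
      congr 2 <;> push_cast <;> omega
    rw [hq, ← b_pow_mul_a_pow, G_neg_natCast, ← mul_assoc, ← pow_add, b_pow_p, zero_mul]

/-! ### Identification of `𝔗(v)` with `∏_w K[X]/(q_w)` -/

/-- The map `(m_w)_w ↦ ∑_w G_w m_w(h)`, the sum being over `|w| < p`. -/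
def phi : (ℤ → K[X]) →ₗ[K] TTv K v p where
  toFun m := ∑ w ∈ Finset.Ioo (-(p : ℤ)) p, G v p w * aeval (TTh K v p) (m w)
  map_add' m m' := by simp [mul_add, Finset.sum_add_distrib]
  map_smul' c m := by simp [Finset.smul_sum]

lemma G_mul_mem (w : ℤ) (f : K[X]) :
    G v p w * aeval (TTh K v p) f ∈ LinearMap.range (phi v p) := by
  by_cases hw : w ∈ Finset.Ioo (-(p : ℤ)) p
  · refine ⟨Pi.single w f, ?_⟩
    change ∑ u ∈ Finset.Ioo (-(p : ℤ)) p, _ = _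
    rw [Finset.sum_eq_single_of_mem w hw]
    · simp
    · intro u _ hu
      simp [Pi.single_eq_of_ne hu]
  · rw [G_eq_zero v p hw, zero_mul]
    exact Submodule.zero_mem _

/-- An element that maps each `G_w K[h]` into some `G_{c(w)} K[h]` maps the range of `phi` into
itself. -/
lemma mul_mem_range {x : TTv K v p} {c : ℤ → ℤ} {g : ℤ → K[X]}
    (hx : ∀ w, x * G v p w = G v p (c w) * aeval (TTh K v p) (g w)) {r : TTv K v p}
    (hr : r ∈ LinearMap.range (phi v p)) : x * r ∈ LinearMap.range (phi v p) := by
  obtain ⟨m, rfl⟩ := hr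
  change x * ∑ u ∈ Finset.Ioo (-(p : ℤ)) p, _ ∈ _
  rw [Finset.mul_sum]
  refine Submodule.sum_mem _ fun w _ => ?_
  rw [← mul_assoc, hx, mul_assoc, ← map_mul]
  exact G_mul_mem v p _ _

/-- The range of `phi` contains `1` and is stable under left multiplication by `a`, `b`, `h`. -/
lemma phi_surjective : Function.Surjective (phi v p) := by
  have key : ∀ (x : FreeAlgebra K (Fin 3)) (r : TTv K v p), r ∈ LinearMap.range (phi v p) →
      RingQuot.mkAlgHom K (TTvRel K v p) x * r ∈ LinearMap.range (phi v p) := by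
    intro x
    induction x using FreeAlgebra.induction with
    | grade0 c =>
      intro r hr
      rw [AlgHom.commutes, ← Algebra.smul_def]
      exact Submodule.smul_mem _ _ hr
    | grade1 i =>
      intro r hr
      fin_cases i
      · exact mul_mem_range v p (a_mul_G v p) hr
      · exact mul_mem_range v p (b_mul_G v p) hr
      · exact mul_mem_range v p (h_mul_G v p) hr
    | mul x y hx hy =>
      intro r hr
      rw [map_mul, mul_assoc]
      exact hx _ (hy _ hr)
    | add x y hx hy =>
      intro r hr
      rw [map_add, add_mul]
      exact Submodule.add_mem _ (hx _ hr) (hy _ hr)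
  have h1 : (1 : TTv K v p) ∈ LinearMap.range (phi v p) := by
    simpa [G] using G_mul_mem v p 0 1
  intro y
  obtain ⟨x, rfl⟩ := RingQuot.mkAlgHom_surjective K (TTvRel K v p) y
  simpa using key x 1 h1

lemma rep_G_mul [CharP K p] (w : ℤ) (f : K[X]) :
    rep v p (G v p w * aeval (TTh K v p) f) ((N v p).mkQ (Pi.single 0 1)) =
      (N v p).mkQ (Pi.single w f) := by
  have h0 : rep v p (aeval (TTh K v p) f) ((N v p).mkQ (Pi.single 0 1)) =
      (N v p).mkQ (Pi.single 0 f) := by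
    rw [← aeval_algHom_apply, rep_h, aeval_bH_mk]
    congr 1
    ext1 u
    by_cases hu : u = 0
    · subst hu; simp [sh_zero]
    · simp [Pi.single_eq_of_ne hu]
  rw [map_mul, Module.End.mul_apply, h0]
  obtain ⟨k, rfl | rfl⟩ := w.eq_nat_or_neg
  · rw [G_natCast, map_pow, rep_a]
    induction k with
    | zero => simp
    | succ k ih =>
      rw [pow_succ', Module.End.mul_apply, ih, bA_mk]
      congr 1
      ext1 u
      change al v (u - 1) * _ = _
      by_cases hu : u = (k + 1 : ℕ)
      · subst hu; simp [al]
      · rw [Pi.single_eq_of_ne hu, Pi.single_eq_of_ne (by omega), mul_zero]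
  · rw [G_neg_natCast, map_pow, rep_b]
    induction k with
    | zero => simp
    | succ k ih =>
      rw [pow_succ', Module.End.mul_apply, ih, bB_mk]
      congr 1
      ext1 u
      change be v u * _ = _
      by_cases hu : u = -((k + 1 : ℕ) : ℤ)
      · have hu' : u + 1 = -(k : ℤ) := by omega
        rw [hu', be, if_neg (by omega), hu]; simp
      · rw [Pi.single_eq_of_ne hu, Pi.single_eq_of_ne (by omega), mul_zero]

/-- Acting on the class of `1` in weight `0` recovers `m` modulo `N` from `phi m`. -/
lemma rep_phi [CharP K p] (m : ℤ → K[X]) :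
    rep v p (phi v p m) ((N v p).mkQ (Pi.single 0 1)) = (N v p).mkQ m := by
  change rep v p (∑ w ∈ Finset.Ioo (-(p : ℤ)) p, _) _ = _
  rw [map_sum, LinearMap.sum_apply, Finset.sum_congr rfl fun w _ => rep_G_mul v p w (m w),
    ← map_sum, Submodule.mkQ_apply, Submodule.mkQ_apply, Submodule.Quotient.eq]
  intro w
  by_cases hw : w ∈ Finset.Ioo (-(p : ℤ)) p
  · rw [Pi.sub_apply, Finset.sum_apply, Finset.sum_eq_single_of_mem w hw]
    · simp
    · intro u _ hu
      exact Pi.single_eq_of_ne hu.symm _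
  · rw [q_eq_one v p hw]
    exact one_dvd _

lemma ker_phi [CharP K p] : LinearMap.ker (phi v p) = N v p := by
  ext m
  rw [LinearMap.mem_ker]
  constructor
  · intro h
    have := rep_phi v p m
    rw [h, map_zero, LinearMap.zero_apply] at this
    rwa [← (N v p).ker_mkQ, LinearMap.mem_ker, eq_comm]
  · intro h
    change ∑ w ∈ Finset.Ioo (-(p : ℤ)) p, _ = _
    refine Finset.sum_eq_zero fun w hw => ?_
    obtain ⟨f, hf⟩ := h w
    rw [hf, map_mul, ← mul_assoc, G_mul_q v p hw, zero_mul]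

/-- Reduction of the weight-`w` entry modulo `q_w`, for `|w| < p`. -/
def theta : (ℤ → K[X]) →ₗ[K]
    ((w : Finset.Ioo (-(p : ℤ)) p) → AdjoinRoot (q v p w)) :=
  LinearMap.pi fun w => (AdjoinRoot.mkₐ (q v p w) : _ →ₐ[K] _).toLinearMap ∘ₗ LinearMap.proj (w : ℤ)

lemma theta_apply (m : ℤ → K[X]) (w : Finset.Ioo (-(p : ℤ)) p) :
    theta v p m w = AdjoinRoot.mk (q v p w) (m w) := rfl

lemma theta_surjective : Function.Surjective (theta v p) := by
  intro y
  choose f hf using fun w => AdjoinRoot.mk_surjective (y w)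
  refine ⟨fun w => if h : w ∈ Finset.Ioo (-(p : ℤ)) p then f ⟨w, h⟩ else 0, ?_⟩
  ext1 w
  rw [theta_apply, dif_pos w.2, hf]

lemma ker_theta : LinearMap.ker (theta v p) = N v p := by
  ext m
  rw [LinearMap.mem_ker, mem_N]
  constructor
  · intro h w
    by_cases hw : w ∈ Finset.Ioo (-(p : ℤ)) p
    · exact AdjoinRoot.mk_eq_zero.1 (congrFun h ⟨w, hw⟩)
    · rw [q_eq_one v p hw]
      exact one_dvd _
  · intro h
    ext1 w
    exact AdjoinRoot.mk_eq_zero.2 (h w)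

end relations

/-! ### The dimension count -/

lemma sum_weights (p : ℕ) (hp : 0 < p) :
    ∑ w ∈ Finset.Ioo (-(p : ℤ)) p, (p - w.natAbs) = p ^ 2 := by
  obtain ⟨k, rfl⟩ : ∃ k, p = k + 1 := ⟨p - 1, by omega⟩
  clear hp
  -- Passing from `p` to `p + 1` raises each of the `2 * p + 1` terms with `|w| ≤ p` by one.
  induction k with
  | zero => decide
  | succ k ih =>
    have h1 : ∑ w ∈ Finset.Ioo (-((k + 1 + 1 : ℕ) : ℤ)) (k + 1 + 1 : ℕ), (k + 1 + 1 - w.natAbs) =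
        ∑ w ∈ Finset.Ioo (-((k + 1 + 1 : ℕ) : ℤ)) (k + 1 + 1 : ℕ), ((k + 1 - w.natAbs) + 1) := by
      refine Finset.sum_congr rfl fun w hw => ?_
      simp only [Finset.mem_Ioo] at hw
      omega
    have h2 : ∑ w ∈ Finset.Ioo (-((k + 1 : ℕ) : ℤ)) (k + 1 : ℕ), (k + 1 - w.natAbs) =
        ∑ w ∈ Finset.Ioo (-((k + 1 + 1 : ℕ) : ℤ)) (k + 1 + 1 : ℕ), (k + 1 - w.natAbs) := by
      refine Finset.sum_subset (fun w hw => ?_) fun w _ hw => ?_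
      · simp only [Finset.mem_Ioo] at hw ⊢
        omega
      · simp only [Finset.mem_Ioo] at hw
        omega
    rw [h1, Finset.sum_add_distrib, ← h2, ih]
    simp only [Finset.sum_const, Int.card_Ioo, smul_eq_mul, mul_one]
    have h3 : (((k + 1 + 1 : ℕ) : ℤ) - -((k + 1 + 1 : ℕ) : ℤ) - 1).toNat = 2 * k + 3 := by omega
    rw [h3]
    ring

lemma rank_target {v : K[X]} (hv : v.Monic) (p : ℕ) (hp : 0 < p) :
    Module.rank K ((w : Finset.Ioo (-(p : ℤ)) p) → AdjoinRoot (q v p w)) =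
      (v.natDegree * p ^ 2 : ℕ) := by
  have hfin : ∀ w : Finset.Ioo (-(p : ℤ)) p, Module.Finite K (AdjoinRoot (q v p w)) :=
    fun w => (q_monic hv p w).finite_adjoinRoot
  have hrank : ∀ w : Finset.Ioo (-(p : ℤ)) p,
      Module.finrank K (AdjoinRoot (q v p w)) = (p - (w : ℤ).natAbs) * v.natDegree := fun w => by
    rw [(AdjoinRoot.powerBasis' (q_monic hv p w)).finrank, AdjoinRoot.powerBasis'_dim,
      q_natDegree hv]
  rw [← Module.finrank_eq_rank, Module.finrank_pi_fintype]
  simp only [hrank]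
  rw [Finset.sum_coe_sort (Finset.Ioo (-(p : ℤ)) p) fun w => (p - w.natAbs) * v.natDegree,
    ← Finset.sum_mul, sum_weights p hp, mul_comm]

end TTvDim

/-!
STATEMENT 7: The `K`-algebra `𝔗(v) = T(v)/(a^p, b^p)` has dimension `np²` as a
`K`-vector space.
-/

theorem statement_7 (K : Type) [Field K] (p n : ℕ) [Fact p.Prime] [CharP K p]
    [IsAlgClosed K] (hn : 0 < n) (hpn : Nat.Coprime p n)
    (v : K[X]) (hmonic : v.Monic) (hdeg : v.natDegree = n)
    (hroots : ∀ x : K, v.IsRoot x → ∃ m : ℕ, (m : K) = x) :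
    Module.rank K (TTv K v p) = (n * p ^ 2 : ℕ) := by
  have e := (Submodule.quotEquivOfEq _ _
    ((TTvDim.ker_phi v p).trans (TTvDim.ker_theta v p).symm)).trans
    ((TTvDim.theta v p).quotKerEquivOfSurjective (TTvDim.theta_surjective v p))
  rw [((TTvDim.phi v p).quotKerEquivOfSurjective (TTvDim.phi_surjective v p)).symm.rank_eq,
    e.rank_eq, TTvDim.rank_target hmonic p (Fact.out : p.Prime).pos, hdeg]
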